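/- Let m ≥ 2, let F_m be a free group with free basis A of size m, and let φ : F_m → ℤ be a surjective homomorphism. Suppose ker φ ≥ R₁ ≥ R₂ ≥ ⋯ ≥ R_n ≥ ⋯ is a descending sequence of normal subgroups of F_m whose intersection is trivial. Then the growth rates of the groups F_m/R_n' with respect to the images of A approach 2m-1 as n → ∞; that is, lim_{n→∞} ω(F_m/R_n', A) = 2m-1. -/

import Mathlib

open Filter Topology

/-- Evaluate a word over the alphabet `A^{±1}` (a letter is a pair `(i, b)`, where
`b = true` means the generator `σ i` and `b = false` means its inverse) in a group. -/
def wordEval {m : ℕ} {G : Type*} [Group G] (σ : Fin m → G)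
    (w : List (Fin m × Bool)) : G :=
  (w.map fun ℓ => if ℓ.2 then σ ℓ.1 else (σ ℓ.1)⁻¹).prod

/-- The ball `B(n) = {g ∈ G : ℓ(g) ≤ n}` of radius `n` in a group with respect to the
generating map `σ`: the set of elements represented by words of length at most `n`. -/
def ball {m : ℕ} {G : Type*} [Group G] (σ : Fin m → G) (n : ℕ) : Set G :=
  {g | ∃ w : List (Fin m × Bool), w.length ≤ n ∧ wordEval σ w = g}

/-- The growth rate `ω(G, A) = lim_{n→∞} |B(n)|^{1/n}`; the limit exists by
submultiplicativity of `|B(n)|`, hence equals the `limsup`. -/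
noncomputable def growthRate {m : ℕ} {G : Type*} [Group G] (σ : Fin m → G) : ℝ :=
  Filter.limsup (fun n : ℕ => ((ball σ n).ncard : ℝ) ^ (1 / (n : ℝ))) Filter.atTop

/-!
The idea of Magnus' embedding: an element of `F / R'` determines the flow of its path on the Cayley
graph of `F / R`, in particular the part of the flow supported on the vertices of height at most
`T`, where the height is induced by `φ`. Let `S` be a set of words of a common length `N` whose
paths leave height `0` for good and end at their maximal height `T`. In a product of members of `S`
all factors but the first one read stay above height `T`, so that the restricted flow reveals the
endpoint in `F / R` of that first factor. If `S` embeds into `F / R`, all factors can thus be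
recovered one after the other, `|S| ^ k` elements of `F / R'` have length at most `k * N`, and the
growth rate is at least `|S| ^ (1 / N)`.

Given `r < 2 * m - 1`, some `S` of this kind has at least `r ^ N` elements. Reduced words of length
`n` take only linearly many heights in `n`, so more than `r ^ n` of them share one; following each
by a word with flipped signs gives many words of height `0`, and products of these become climbs
once padded with powers of a letter of positive height. Since `S` is finite and injects into `F`,
it embeds into `F / Rₙ` for all large `n`.
-/

section ConcatPow

variable {β : Type*} [DecidableEq β]

theorem card_image₂_append {A B : Finset (List β)} {n : ℕ} (hA : ∀ l ∈ A, l.length = n) :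
    (Finset.image₂ (· ++ ·) A B).card = A.card * B.card := by
  rw [Finset.card_image₂_iff]
  rintro ⟨a, b⟩ ⟨ha, -⟩ ⟨a', b'⟩ ⟨ha', -⟩ h
  obtain ⟨rfl, rfl⟩ := List.append_inj h ((hA a ha).trans (hA a' ha').symm)
  rfl

/-- The words obtained by concatenating `k` members of `S`. -/
def concatPow (S : Finset (List β)) : ℕ → Finset (List β)
  | 0 => {[]}
  | k + 1 => Finset.image₂ (· ++ ·) (concatPow S k) S

variable {S : Finset (List β)} {n : ℕ}

theorem concatPow_induction {P : List β → Prop} (nil : P [])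
    (append : ∀ l u, P l → u ∈ S → P (l ++ u)) {k : ℕ} {l : List β} (hl : l ∈ concatPow S k) :
    P l := by
  induction k generalizing l with
  | zero => rwa [Finset.mem_singleton.1 hl]
  | succ k ih =>
    obtain ⟨l, hl', u, hu, rfl⟩ := Finset.mem_image₂.1 hl
    exact append l u (ih hl') hu

theorem length_of_mem_concatPow (hS : ∀ u ∈ S, u.length = n) {k : ℕ} {l : List β}
    (hl : l ∈ concatPow S k) : l.length = k * n := by
  induction k generalizing l with
  | zero => simp [Finset.mem_singleton.1 hl]
  | succ k ih =>
    obtain ⟨l, hl', u, hu, rfl⟩ := Finset.mem_image₂.1 hl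
    rw [List.length_append, ih hl', hS u hu, Nat.succ_mul]

theorem card_concatPow (hS : ∀ u ∈ S, u.length = n) (k : ℕ) :
    (concatPow S k).card = S.card ^ k := by
  induction k with
  | zero => rfl
  | succ k ih =>
    rw [concatPow, card_image₂_append fun _ => length_of_mem_concatPow hS, ih, pow_succ]

end ConcatPow

/-! ### Reduced words -/

section ReducedWords

variable {α : Type*}

theorem mk_injOn_isReduced :
    Set.InjOn FreeGroup.mk {l : List (α × Bool) | FreeGroup.IsReduced l} := by
  classical
  intro l hl l' hl' h
  rw [← FreeGroup.IsReduced.reduce_eq hl, ← FreeGroup.IsReduced.reduce_eq hl',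
    ← FreeGroup.toWord_mk, h, FreeGroup.toWord_mk]

theorem isReduced_concat_sign {l : List (α × Bool)} {x : α × Bool}
    (h : FreeGroup.IsReduced (l ++ [x])) (b : α) :
    FreeGroup.IsReduced (l ++ [x] ++ [(b, x.2)]) :=
  h.append_overlap (FreeGroup.isReduced_cons_cons.2 ⟨fun _ => rfl, .singleton⟩)
    (List.cons_ne_nil _ _)

section Counting

variable [Fintype α] [DecidableEq α]

/-- The words `l` of length `n` such that `x :: l` is reduced. -/
def reducedTails : ℕ → α × Bool → Finset (List (α × Bool))
  | 0, _ => {[]}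
  | n + 1, x =>
    (Finset.univ.erase (x.1, !x.2)).biUnion fun y => (reducedTails n y).image (List.cons y)

theorem mem_reducedTails {n : ℕ} {x : α × Bool} {l : List (α × Bool)} :
    l ∈ reducedTails n x ↔ l.length = n ∧ FreeGroup.IsReduced (x :: l) := by
  induction n generalizing x l with
  | zero =>
    rw [reducedTails, Finset.mem_singleton, List.length_eq_zero_iff, iff_self_and]
    rintro rfl
    exact .singleton
  | succ n ih =>
    have sign_iff (y : α × Bool) : y ≠ (x.1, !x.2) ↔ (x.1 = y.1 → x.2 = y.2) := by
      rw [Ne, Prod.ext_iff, not_and, eq_comm, Bool.eq_not, not_not, eq_comm (a := x.2)]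
    cases l with
    | nil => simp [reducedTails]
    | cons y l =>
      simp [reducedTails, ih, ← sign_iff, and_left_comm]

theorem card_reducedTails (n : ℕ) (x : α × Bool) :
    (reducedTails n x).card = (2 * Fintype.card α - 1) ^ n := by
  induction n generalizing x with
  | zero => rfl
  | succ n ih =>
    rw [reducedTails, Finset.card_biUnion]
    · simp [Finset.card_image_of_injective _ List.cons_injective, ih, mul_comm, pow_succ]
    · refine fun y _ z _ hyz => Finset.disjoint_left.2 fun l hy hz => hyz ?_
      obtain ⟨_, -, rfl⟩ := Finset.mem_image.1 hy
      obtain ⟨_, -, h⟩ := Finset.mem_image.1 hz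
      exact (List.cons.inj h).1.symm

theorem exists_mem_reducedTails [Nonempty α] {l : List (α × Bool)} (hl : FreeGroup.IsReduced l) :
    ∃ x, l ∈ reducedTails l.length x := by
  cases l with
  | nil => exact ⟨Classical.arbitrary _, mem_reducedTails.2 ⟨rfl, .singleton⟩⟩
  | cons y l =>
    exact ⟨y, mem_reducedTails.2 ⟨rfl, FreeGroup.isReduced_cons_cons.2 ⟨fun _ => rfl, hl⟩⟩⟩

end Counting

/-- A reduced word whose first letter is `a^±¹` and whose last letter is `b^±¹`. The empty word is
allowed, so that for `a ≠ b` these words form a submonoid under concatenation. -/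
structure IsBlock (a b : α) (l : List (α × Bool)) : Prop where
  isReduced : FreeGroup.IsReduced l
  fst_head : ∀ x ∈ l.head?, x.1 = a
  fst_getLast : ∀ x ∈ l.getLast?, x.1 = b

theorem IsBlock.nil (a b : α) : IsBlock a b [] := ⟨.nil, by simp, by simp⟩

theorem IsBlock.append {a b : α} (hab : a ≠ b) {l l' : List (α × Bool)} (hl : IsBlock a b l)
    (hl' : IsBlock a b l') : IsBlock a b (l ++ l') where
  isReduced := List.isChain_append.2 ⟨hl.isReduced, hl'.isReduced, fun x hx y hy hxy =>
    absurd ((hl'.fst_head y hy).symm.trans (hxy.symm.trans (hl.fst_getLast x hx))) hab⟩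
  fst_head x hx := by
    rw [List.head?_append, Option.mem_def, Option.or_eq_some_iff] at hx
    exact hx.elim (hl.fst_head x) fun h => hl'.fst_head x h.2
  fst_getLast x hx := by
    rw [List.getLast?_append, Option.mem_def, Option.or_eq_some_iff] at hx
    exact hx.elim (hl'.fst_getLast x) fun h => hl.fst_getLast x h.2

/-- The image of a word under the substitution inverting each generator (the order of the letters
is kept). -/
def flipSigns (l : List (α × Bool)) : List (α × Bool) := l.map (Prod.map id not)

theorem flipSigns_injective : Function.Injective (flipSigns (α := α)) :=
  List.map_injective_iff.2 (Function.injective_id.prodMap Bool.not_injective)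

theorem length_flipSigns (l : List (α × Bool)) : (flipSigns l).length = l.length :=
  List.length_map _

theorem IsBlock.flipSigns {a b : α} {l : List (α × Bool)} (hl : IsBlock a b l) :
    IsBlock a b (flipSigns l) where
  isReduced := (List.isChain_map _).2 <|
    hl.isReduced.imp fun _ _ h hxy => congrArg not (h hxy)
  fst_head x hx := by
    rw [_root_.flipSigns, List.head?_map] at hx
    obtain ⟨y, hy, rfl⟩ := Option.mem_map.1 hx
    exact hl.fst_head y hy
  fst_getLast x hx := by
    rw [_root_.flipSigns, List.getLast?_map] at hx
    obtain ⟨y, hy, rfl⟩ := Option.mem_map.1 hx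
    exact hl.fst_getLast y hy

theorem exists_blocks [Fintype α] (a b : α) (n : ℕ) :
    ∃ W : Finset (List (α × Bool)), W.card = (2 * Fintype.card α - 1) ^ n ∧
      ∀ w ∈ W, w.length = n + 2 ∧ IsBlock a b w := by
  classical
  -- The final letter `b` takes the sign of the letter before it, so that no cancellation occurs.
  have exists_sign (l : List (α × Bool)) :
      ∃ s, FreeGroup.IsReduced ((a, true) :: l) →
        FreeGroup.IsReduced ((a, true) :: l ++ [(b, s)]) := by
    obtain ⟨l', x, h⟩ :=
      (List.eq_nil_or_concat' ((a, true) :: l)).resolve_left (List.cons_ne_nil _ _)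
    exact ⟨x.2, fun hl => by rw [h] at hl ⊢; exact isReduced_concat_sign hl b⟩
  choose s hs using exists_sign
  refine ⟨(reducedTails n (a, true)).image fun l => (a, true) :: l ++ [(b, s l)], ?_, ?_⟩
  · rw [Finset.card_image_of_injective, card_reducedTails]
    exact fun l l' h => (List.append_inj' (List.cons.inj h).2 rfl).1
  · refine Finset.forall_mem_image.2 fun l hl => ?_
    obtain ⟨hlen, hred⟩ := mem_reducedTails.1 hl
    refine ⟨by simp [hlen], hs l hred, by simp, fun x hx => ?_⟩
    rw [List.getLast?_concat, Option.mem_some_iff] at hx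
    rw [← hx]

theorem mk_injOn_concatPow_of_isBlock [DecidableEq α] {a b : α} (hab : a ≠ b)
    {U : Finset (List (α × Bool))} (hU : ∀ u ∈ U, IsBlock a b u) (k : ℕ) :
    Set.InjOn FreeGroup.mk (concatPow U k : Set (List (α × Bool))) :=
  mk_injOn_isReduced.mono fun _ hl =>
    (concatPow_induction (P := IsBlock a b) (.nil a b)
      (fun _ u hl hu => hl.append hab (hU u hu)) hl).isReduced

end ReducedWords

/-! ### Heights and climbs -/

section Height

variable {α : Type*} (φ : FreeGroup α →* Multiplicative ℤ)

/-- The value of `φ` on the element of the free group represented by the word `l`. -/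
def wordHeight (l : List (α × Bool)) : ℤ := (φ (FreeGroup.mk l)).toAdd

@[simp]
theorem wordHeight_nil : wordHeight φ [] = 0 := by
  rw [wordHeight, ← FreeGroup.one_eq_mk, map_one, toAdd_one]

theorem wordHeight_append (l l' : List (α × Bool)) :
    wordHeight φ (l ++ l') = wordHeight φ l + wordHeight φ l' := by
  rw [wordHeight, ← FreeGroup.mul_mk, map_mul, toAdd_mul, wordHeight, wordHeight]

theorem wordHeight_cons (x : α × Bool) (l : List (α × Bool)) :
    wordHeight φ (x :: l) = wordHeight φ [x] + wordHeight φ l :=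
  wordHeight_append φ [x] l

theorem wordHeight_replicate (n : ℕ) (x : α × Bool) :
    wordHeight φ (List.replicate n x) = n * wordHeight φ [x] := by
  induction n with
  | zero => simp
  | succ n ih => rw [List.replicate_succ, wordHeight_cons, ih]; push_cast; ring

theorem wordHeight_flip (x : α × Bool) : wordHeight φ [(x.1, !x.2)] = -wordHeight φ [x] := by
  rw [wordHeight, wordHeight, ← toAdd_inv, ← map_inv, FreeGroup.inv_mk]
  rfl

theorem wordHeight_flipSigns (l : List (α × Bool)) :
    wordHeight φ (flipSigns l) = -wordHeight φ l := by
  induction l with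
  | nil => simp [flipSigns]
  | cons x l ih =>
    have flip_cons : flipSigns (x :: l) = (x.1, !x.2) :: flipSigns l := rfl
    rw [flip_cons, wordHeight_cons, ih, wordHeight_flip, wordHeight_cons φ x l,
      neg_add]

theorem exists_abs_wordHeight_le [Finite α] :
    ∃ M : ℕ, ∀ l : List (α × Bool), |wordHeight φ l| ≤ M * l.length := by
  obtain ⟨M, hM⟩ := (Set.finite_range fun x : α × Bool => (wordHeight φ [x]).natAbs).bddAbove
  refine ⟨M, fun l => ?_⟩
  induction l with
  | nil => simp
  | cons x l ih =>
    have letter_le : |wordHeight φ [x]| ≤ M := by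
      rw [Int.abs_eq_natAbs]
      exact_mod_cast hM ⟨x, rfl⟩
    calc |wordHeight φ (x :: l)| ≤ |wordHeight φ [x]| + |wordHeight φ l| := by
          rw [wordHeight_cons]; exact abs_add_le _ _
      _ ≤ M + M * l.length := add_le_add letter_le ih
      _ = M * (x :: l).length := by rw [List.length_cons]; push_cast; ring

variable {φ}

theorem exists_wordHeight_singleton_pos (hφ : φ ≠ 1) : ∃ x : α × Bool, 0 < wordHeight φ [x] := by
  obtain ⟨a, ha⟩ : ∃ a, wordHeight φ [(a, true)] ≠ 0 := by
    by_contra! h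
    exact hφ (FreeGroup.ext_hom _ _ h)
  rcases ha.lt_or_gt with h | h
  · exact ⟨(a, false), (wordHeight_flip φ (a, true)).symm ▸ neg_pos.2 h⟩
  · exact ⟨(a, true), h⟩

end Height

theorem suffix_or_exists_of_suffix_append {β : Type*} {s l l' : List β} (h : s <:+ l ++ l') :
    s <:+ l' ∨ ∃ t, t <:+ l ∧ s = t ++ l' := by
  obtain ⟨p, hp⟩ := h
  rcases List.append_eq_append_iff.1 hp with ⟨t, rfl, rfl⟩ | ⟨t, -, rfl⟩
  · exact .inr ⟨t, List.suffix_append p t, rfl⟩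
  · exact .inl (List.suffix_append t s)

section Climbs

variable {α : Type*} (φ : FreeGroup α →* Multiplicative ℤ)

/-- A word all of whose nonempty suffixes have positive height. Words are read from right to left,
so that a word traces a path by left multiplications. -/
def IsPositiveWord (l : List (α × Bool)) : Prop := ∀ s, s <:+ l → s ≠ [] → 0 < wordHeight φ s

/-- A word which, read from right to left, leaves height `0` for good and ends at its maximal
height `T`. -/
structure IsClimb (T : ℤ) (u : List (α × Bool)) : Prop where
  isPositiveWord : IsPositiveWord φ u
  le_height : ∀ s, s <:+ u → wordHeight φ s ≤ T
  wordHeight_eq : wordHeight φ u = T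

variable {φ}

theorem IsClimb.nonneg {T : ℤ} {u : List (α × Bool)} (hu : IsClimb φ T u) : 0 ≤ T := by
  simpa using hu.le_height [] u.nil_suffix

theorem IsPositiveWord.append {T : ℤ} {l u : List (α × Bool)} (hl : IsPositiveWord φ l)
    (hu : IsClimb φ T u) : IsPositiveWord φ (l ++ u) := by
  intro s hs hs0
  rcases suffix_or_exists_of_suffix_append hs with hs | ⟨t, ht, rfl⟩
  · exact hu.isPositiveWord s hs hs0
  · rcases eq_or_ne t [] with rfl | ht0
    · exact hu.isPositiveWord u List.suffix_rfl hs0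
    · rw [wordHeight_append, hu.wordHeight_eq]
      exact add_pos_of_pos_of_nonneg (hl t ht ht0) hu.nonneg

theorem isPositiveWord_of_mem_concatPow [DecidableEq α] {T : ℤ} {S : Finset (List (α × Bool))}
    (hS : ∀ u ∈ S, IsClimb φ T u) {k : ℕ} {l : List (α × Bool)} (hl : l ∈ concatPow S k) :
    IsPositiveWord φ l := by
  refine concatPow_induction ?_ (fun l u hl hu => hl.append (hS u hu)) hl
  exact fun s hs hs0 => absurd (List.suffix_nil.1 hs) hs0

theorem wordHeight_of_mem_concatPow [DecidableEq α] {C : ℤ} {U : Finset (List (α × Bool))}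
    (hC : 0 ≤ C)
    (hU : ∀ u ∈ U, wordHeight φ u = 0 ∧ ∀ s, s <:+ u → |wordHeight φ s| ≤ C)
    {k : ℕ} {l : List (α × Bool)} (hl : l ∈ concatPow U k) :
    wordHeight φ l = 0 ∧ ∀ s, s <:+ l → |wordHeight φ s| ≤ C := by
  refine concatPow_induction
    (P := fun l => wordHeight φ l = 0 ∧ ∀ s, s <:+ l → |wordHeight φ s| ≤ C)
    ⟨wordHeight_nil φ, fun s hs => ?_⟩ (fun l u hl hu => ?_) hl
  · rwa [List.suffix_nil.1 hs, wordHeight_nil, abs_zero]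
  · refine ⟨by rw [wordHeight_append, hl.1, (hU u hu).1, add_zero], fun s hs => ?_⟩
    rcases suffix_or_exists_of_suffix_append hs with hs | ⟨t, ht, rfl⟩
    · exact (hU u hu).2 s hs
    · rw [wordHeight_append, (hU u hu).1, add_zero]
      exact hl.2 t ht

/-- The word `l` with `K` copies of the letter `x` added at both ends. -/
def pad (x : α × Bool) (K : ℕ) (l : List (α × Bool)) : List (α × Bool) :=
  List.replicate K x ++ (l ++ List.replicate K x)

theorem pad_injective (x : α × Bool) (K : ℕ) : Function.Injective (pad x K) := fun _ _ h =>
  List.append_cancel_right (List.append_cancel_left h)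

theorem length_pad (x : α × Bool) (K : ℕ) (l : List (α × Bool)) :
    (pad x K l).length = 2 * K + l.length := by
  simp only [pad, List.length_append, List.length_replicate]
  ring

theorem isClimb_pad {x : α × Bool} (hx : 0 < wordHeight φ [x]) {K : ℕ}
    {l : List (α × Bool)} (hl : wordHeight φ l = 0)
    (hsuffix : ∀ s, s <:+ l → |wordHeight φ s| < K) :
    IsClimb φ (2 * (K * wordHeight φ [x])) (pad x K l) := by
  have le_mul : (K : ℤ) ≤ K * wordHeight φ [x] := le_mul_of_one_le_right K.cast_nonneg hx
  have replicate_suffix {t : List (α × Bool)} (ht : t <:+ List.replicate K x) :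
      wordHeight φ t = t.length * wordHeight φ [x] ∧
        t.length * wordHeight φ [x] ≤ K * wordHeight φ [x] := by
    obtain ⟨hlen, ht⟩ := List.suffix_replicate_iff.1 ht
    exact ⟨by rw [← wordHeight_replicate, ← ht],
      mul_le_mul_of_nonneg_right (by exact_mod_cast hlen) hx.le⟩
  have length_mul_nonneg (t : List (α × Bool)) : 0 ≤ t.length * wordHeight φ [x] := by positivity
  have bounds (s : List (α × Bool)) (hs : s <:+ pad x K l) :
      (s ≠ [] → 0 < wordHeight φ s) ∧ wordHeight φ s ≤ 2 * (K * wordHeight φ [x]) := by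
    rcases suffix_or_exists_of_suffix_append hs with hs | ⟨t, ht, rfl⟩
    · rcases suffix_or_exists_of_suffix_append hs with hs | ⟨t, ht, rfl⟩
      · obtain ⟨h_eq, h_le⟩ := replicate_suffix hs
        refine ⟨fun h0 => ?_, by linarith [length_mul_nonneg s]⟩
        rw [h_eq]
        exact mul_pos (by exact_mod_cast List.length_pos_iff.2 h0) hx
      · have h_abs := abs_lt.1 (hsuffix t ht)
        rw [wordHeight_append, wordHeight_replicate]
        exact ⟨fun _ => by linarith, by linarith⟩
    · obtain ⟨h_eq, h_le⟩ := replicate_suffix ht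
      have K_pos : (0 : ℤ) < K := (abs_nonneg _).trans_lt (hsuffix [] l.nil_suffix)
      rw [wordHeight_append, wordHeight_append, hl, wordHeight_replicate, h_eq]
      exact ⟨fun _ => by linarith [length_mul_nonneg t], by linarith⟩
  refine ⟨fun s hs => (bounds s hs).1, fun s hs => (bounds s hs).2, ?_⟩
  rw [pad, wordHeight_append, wordHeight_append, hl, wordHeight_replicate]
  ring

end Climbs

theorem exists_linear_mul_pow_lt_pow {r q : ℝ} (hr : 0 ≤ r) (hrq : r < q) (a b : ℝ) :
    ∃ n : ℕ, (a * n + b) * r ^ n < q ^ n := by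
  have q_pos : 0 < q := hr.trans_lt hrq
  have abs_div_lt : |r / q| < 1 := by
    rwa [abs_of_nonneg (div_nonneg hr q_pos.le), div_lt_one q_pos]
  have h_lim : Tendsto
      (fun n : ℕ => a * ((n : ℝ) ^ 1 * (r / q) ^ n) + b * ((n : ℝ) ^ 0 * (r / q) ^ n)) atTop
      (𝓝 (a * 0 + b * 0)) :=
    ((tendsto_pow_const_mul_const_pow_of_abs_lt_one 1 abs_div_lt).const_mul a).add
      ((tendsto_pow_const_mul_const_pow_of_abs_lt_one 0 abs_div_lt).const_mul b)
  rw [mul_zero, mul_zero, add_zero] at h_lim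
  obtain ⟨n, hn⟩ := (h_lim.eventually_lt_const one_pos).exists
  refine ⟨n, (div_lt_one (pow_pos q_pos n)).1 ?_⟩
  convert hn using 1
  rw [div_pow]
  ring

theorem exists_pow_add_mul_le_pow {r c : ℝ} {n : ℕ} (hr : 0 < r) (h : r ^ n < c) (K : ℕ) :
    ∃ t : ℕ, r ^ (K + t * n) ≤ c ^ t := by
  obtain ⟨t, ht⟩ : ∃ t : ℕ, r ^ K < (c / r ^ n) ^ t :=
    pow_unbounded_of_one_lt _ ((one_lt_div (pow_pos hr n)).2 h)
  rw [div_pow, lt_div_iff₀ (by positivity), ← pow_mul, ← pow_add, mul_comm n] at ht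
  exact ⟨t, ht.le⟩

section CountingClimbs

variable {α : Type*} [Fintype α] {φ : FreeGroup α →* Multiplicative ℤ} {r : ℝ}

theorem exists_blocks_of_constant_height (φ : FreeGroup α →* Multiplicative ℤ) (a b : α)
    (hr : 0 ≤ r) (hr' : r < (2 * Fintype.card α - 1 : ℕ)) :
    ∃ (n : ℕ) (v : ℤ) (W : Finset (List (α × Bool))), r ^ n < W.card ∧
      ∀ w ∈ W, w.length = n ∧ IsBlock a b w ∧ wordHeight φ w = v := by
  obtain ⟨M, hM⟩ := exists_abs_wordHeight_le φ
  obtain ⟨n, hn⟩ := exists_linear_mul_pow_lt_pow hr hr' (2 * M * r ^ 2) ((4 * M + 1) * r ^ 2)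
  obtain ⟨W, hW_card, hW⟩ := exists_blocks a b n
  have mem_Icc : ∀ w ∈ W, wordHeight φ w ∈ Finset.Icc (-(M * (n + 2) : ℤ)) (M * (n + 2)) := by
    intro w hw
    rw [Finset.mem_Icc, ← abs_le]
    simpa [(hW w hw).1] using hM w
  have card_lt : (Finset.Icc (-(M * (n + 2) : ℤ)) (M * (n + 2))).card • r ^ (n + 2) < W.card := by
    have card_Icc : (Finset.Icc (-(M * (n + 2) : ℤ)) (M * (n + 2))).card = 2 * M * (n + 2) + 1 := by
      rw [Int.card_Icc]
      lia
    rw [card_Icc, nsmul_eq_mul, hW_card, Nat.cast_pow]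
    convert hn using 1
    push_cast
    ring
  obtain ⟨v, -, hv⟩ := Finset.exists_lt_card_fiber_of_nsmul_lt_card_of_maps_to mem_Icc card_lt
  refine ⟨n + 2, v, {w ∈ W | wordHeight φ w = v}, hv, fun w hw => ?_⟩
  obtain ⟨hwW, hwv⟩ := Finset.mem_filter.1 hw
  exact ⟨(hW w hwW).1, (hW w hwW).2, hwv⟩

theorem exists_blocks_of_height_zero (φ : FreeGroup α →* Multiplicative ℤ) {a b : α} (hab : a ≠ b)
    (hr : 0 ≤ r) (hr' : r < (2 * Fintype.card α - 1 : ℕ)) :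
    ∃ (n : ℕ) (U : Finset (List (α × Bool))), r ^ n < U.card ∧
      ∀ u ∈ U, u.length = n ∧ IsBlock a b u ∧ wordHeight φ u = 0 := by
  classical
  -- Following a block of height `v` by one with flipped signs cancels `v`.
  obtain ⟨n, v, W, hW_card, hW⟩ := exists_blocks_of_constant_height φ a b hr hr'
  refine ⟨n + n, Finset.image₂ (· ++ ·) W (W.image flipSigns), ?_, ?_⟩
  · rw [card_image₂_append fun w hw => (hW w hw).1,
      Finset.card_image_of_injective _ flipSigns_injective, pow_add, Nat.cast_mul]
    exact mul_lt_mul'' hW_card hW_card (pow_nonneg hr n) (pow_nonneg hr n)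
  · rw [Finset.forall_mem_image₂]
    intro w hw
    rw [Finset.forall_mem_image]
    intro w' hw'
    obtain ⟨hw_len, hw_block, hw_height⟩ := hW w hw
    obtain ⟨hw'_len, hw'_block, hw'_height⟩ := hW w' hw'
    exact ⟨by rw [List.length_append, length_flipSigns, hw_len, hw'_len],
      hw_block.append hab hw'_block.flipSigns,
      by rw [wordHeight_append, wordHeight_flipSigns, hw_height, hw'_height, add_neg_cancel]⟩

theorem exists_climbs (hα : 1 < Fintype.card α) (hφ : φ ≠ 1) (hr : 0 < r)
    (hr' : r < (2 * Fintype.card α - 1 : ℕ)) :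
    ∃ (N : ℕ) (T : ℤ) (S : Finset (List (α × Bool))), 0 < N ∧ r ^ N ≤ S.card ∧
      (∀ u ∈ S, u.length = N ∧ IsClimb φ T u) ∧
        Set.InjOn FreeGroup.mk (S : Set (List (α × Bool))) := by
  classical
  obtain ⟨a, b, hab⟩ := Fintype.exists_pair_of_one_lt_card hα
  obtain ⟨x, hx⟩ := exists_wordHeight_singleton_pos hφ
  obtain ⟨M, hM⟩ := exists_abs_wordHeight_le φ
  obtain ⟨n, U, hU_card, hU⟩ := exists_blocks_of_height_zero φ hab hr.le hr'
  set K := M * n + 1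
  obtain ⟨t, ht⟩ := exists_pow_add_mul_le_pow hr hU_card (2 * K)
  have suffix_bounded (u) (hu : u ∈ U) (s) (hs : s <:+ u) : |wordHeight φ s| ≤ M * n := by
    refine (hM s).trans (mul_le_mul_of_nonneg_left ?_ M.cast_nonneg)
    exact_mod_cast (hU u hu).1 ▸ hs.length_le
  have concat_bounded {l} (hl : l ∈ concatPow U t) :
      wordHeight φ l = 0 ∧ ∀ s, s <:+ l → |wordHeight φ s| ≤ M * n :=
    wordHeight_of_mem_concatPow (by positivity)
      (fun u hu => ⟨(hU u hu).2.2, suffix_bounded u hu⟩) hl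
  refine ⟨2 * K + t * n, 2 * (K * wordHeight φ [x]), (concatPow U t).image (pad x K),
    by lia, ?_, ?_, ?_⟩
  · rwa [Finset.card_image_of_injective _ (pad_injective x K),
      card_concatPow fun u hu => (hU u hu).1, Nat.cast_pow]
  · refine Finset.forall_mem_image.2 fun l hl => ⟨?_, ?_⟩
    · rw [length_pad, length_of_mem_concatPow (fun u hu => (hU u hu).1) hl]
    · refine isClimb_pad hx (concat_bounded hl).1 fun s hs => ?_
      exact_mod_cast Int.lt_add_one_iff.2 ((concat_bounded hl).2 s hs)
  · rw [Finset.coe_image]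
    rintro _ ⟨l, hl, rfl⟩ _ ⟨l', hl', rfl⟩ h
    simp only [pad, ← FreeGroup.mul_mk, mul_right_inj, mul_left_inj] at h
    rw [mk_injOn_concatPow_of_isBlock hab (fun u hu => (hU u hu).2.1) t hl hl' h]

end CountingClimbs

/-! ### Flows on Cayley graphs -/

section Flow

open Classical in
/-- The difference `d h - d g` of a potential `d` along an edge from `g` to `h`, counted only when
both endpoints lie in `L`. -/
noncomputable def restrictedDiff {G M : Type*} [AddCommGroup M] (L : Set G) (d : G → M)
    (g h : G) : M :=
  if g ∈ L ∧ h ∈ L then d h - d g else 0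

theorem restrictedDiff_swap {G M : Type*} [AddCommGroup M] (L : Set G) (d : G → M) (g h : G) :
    restrictedDiff L d h g = -restrictedDiff L d g h := by
  by_cases hg : g ∈ L <;> by_cases hh : h ∈ L <;> simp [restrictedDiff, hg, hh]

theorem mk_cons_eq_mul {α : Type*} (x : α × Bool) (l : List (α × Bool)) :
    FreeGroup.mk (x :: l) = FreeGroup.mk [x] * FreeGroup.mk l :=
  rfl

variable {α G M : Type*} [Group G] [AddCommGroup M] (π : FreeGroup α →* G) (L : Set G) (d : G → M)

/-- The action of the free group on `G × M` which moves the first coordinate along the Cayley graph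
of `G` and accumulates in the second one the differences of `d` along the edges inside `L`. -/
noncomputable def restrictedFlow : FreeGroup α →* Equiv.Perm (G × M) :=
  FreeGroup.lift fun i => Equiv.prodShear (Equiv.mulLeft (π (.of i)))
    fun g => Equiv.addRight (restrictedDiff L d g (π (.of i) * g))

theorem restrictedFlow_mk_singleton (x : α × Bool) (g : G) (v : M) :
    restrictedFlow π L d (FreeGroup.mk [x]) (g, v) =
      (π (FreeGroup.mk [x]) * g, v + restrictedDiff L d g (π (FreeGroup.mk [x]) * g)) := by
  have flow_of (i : α) (g : G) (v : M) : restrictedFlow π L d (.of i) (g, v) =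
      (π (.of i) * g, v + restrictedDiff L d g (π (.of i) * g)) := by
    rw [restrictedFlow, FreeGroup.lift_apply_of]
    rfl
  obtain ⟨i, _ | _⟩ := x
  · have mk_eq : FreeGroup.mk [(i, false)] = (FreeGroup.of i)⁻¹ := rfl
    rw [mk_eq, map_inv, Equiv.Perm.inv_eq_iff_eq, map_inv, flow_of, mul_inv_cancel_left,
      restrictedDiff_swap, neg_add_cancel_right]
  · exact flow_of i g v

theorem exists_restrictedFlow_eq (w : FreeGroup α) :
    ∃ c : G → M, ∀ g v, restrictedFlow π L d w (g, v) = (π w * g, v + c g) := by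
  obtain ⟨l, rfl⟩ : ∃ l, FreeGroup.mk l = w := Quot.exists_rep w
  induction l with
  | nil => exact ⟨0, by simp [← FreeGroup.one_eq_mk]⟩
  | cons x l ih =>
    obtain ⟨c, hc⟩ := ih
    refine ⟨fun g => c g + restrictedDiff L d (π (FreeGroup.mk l) * g)
      (π (FreeGroup.mk [x]) * (π (FreeGroup.mk l) * g)), fun g v => ?_⟩
    rw [mk_cons_eq_mul, map_mul, map_mul, Equiv.Perm.mul_apply, hc, restrictedFlow_mk_singleton,
      mul_assoc, add_assoc]

theorem commutator_ker_le_ker_restrictedFlow : ⁅π.ker, π.ker⁆ ≤ (restrictedFlow π L d).ker := by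
  refine Subgroup.commutator_le.2 fun x hx y hy => ?_
  obtain ⟨c, hc⟩ := exists_restrictedFlow_eq π L d x
  obtain ⟨c', hc'⟩ := exists_restrictedFlow_eq π L d y
  rw [MonoidHom.mem_ker, map_commutatorElement, commutatorElement_eq_one_iff_mul_comm]
  ext1 ⟨g, v⟩
  simp only [Equiv.Perm.mul_apply, hc, hc', MonoidHom.mem_ker.1 hx, MonoidHom.mem_ker.1 hy,
    one_mul, add_right_comm]

variable {L}

theorem restrictedFlow_mk_of_suffixes_mem {l : List (α × Bool)} {g : G}
    (hl : ∀ s, s <:+ l → π (FreeGroup.mk s) * g ∈ L) (v : M) :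
    restrictedFlow π L d (FreeGroup.mk l) (g, v) =
      (π (FreeGroup.mk l) * g, v + (d (π (FreeGroup.mk l) * g) - d g)) := by
  induction l with
  | nil => simp [← FreeGroup.one_eq_mk]
  | cons x l ih =>
    have h_start := hl l (List.suffix_cons x l)
    have h_end := hl (x :: l) List.suffix_rfl
    rw [mk_cons_eq_mul, map_mul, mul_assoc] at h_end
    rw [mk_cons_eq_mul, map_mul, Equiv.Perm.mul_apply,
      ih fun s hs => hl s (hs.trans (List.suffix_cons x l)), restrictedFlow_mk_singleton, map_mul,
      mul_assoc, restrictedDiff, if_pos ⟨h_start, h_end⟩, add_assoc, sub_add_sub_cancel']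

theorem restrictedFlow_mk_of_suffixes_notMem {l : List (α × Bool)} {g : G}
    (hl : ∀ s, s <:+ l → s ≠ [] → π (FreeGroup.mk s) * g ∉ L) (v : M) :
    restrictedFlow π L d (FreeGroup.mk l) (g, v) = (π (FreeGroup.mk l) * g, v) := by
  induction l with
  | nil => simp [← FreeGroup.one_eq_mk]
  | cons x l ih =>
    have h_end := hl (x :: l) List.suffix_rfl (List.cons_ne_nil x l)
    rw [mk_cons_eq_mul, map_mul, mul_assoc] at h_end
    rw [mk_cons_eq_mul, map_mul, Equiv.Perm.mul_apply,
      ih fun s hs => hl s (hs.trans (List.suffix_cons x l)), restrictedFlow_mk_singleton, map_mul,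
      mul_assoc, restrictedDiff, if_neg fun h => h_end h.2, add_zero]

end Flow

section Decoding

variable {α : Type*} {φ : FreeGroup α →* Multiplicative ℤ} {R : Subgroup (FreeGroup α)} [R.Normal]
  {T : ℤ}

-- Reading `u` the path stays in heights at most `T`, where the flow telescopes; reading `l` it is
-- strictly above `T` and the flow no longer changes.
theorem restrictedFlow_append_climb (hR : R ≤ φ.ker) {l u : List (α × Bool)}
    (hl : IsPositiveWord φ l) (hu : IsClimb φ T u) :
    (restrictedFlow (QuotientGroup.mk' R) {g | (QuotientGroup.lift R φ hR g).toAdd ≤ T}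
      FreeAbelianGroup.of (FreeGroup.mk (l ++ u)) (1, 0)).2 =
    FreeAbelianGroup.of (QuotientGroup.mk (FreeGroup.mk u)) - FreeAbelianGroup.of 1 := by
  have inside (s : List (α × Bool)) (hs : s <:+ u) : QuotientGroup.mk' R (FreeGroup.mk s) * 1 ∈
      {g | (QuotientGroup.lift R φ hR g).toAdd ≤ T} := by
    rw [mul_one]
    exact hu.le_height s hs
  have outside (s : List (α × Bool)) (hs : s <:+ l) (hs0 : s ≠ []) :
      QuotientGroup.mk' R (FreeGroup.mk s) * (QuotientGroup.mk' R (FreeGroup.mk u) * 1) ∉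
        {g | (QuotientGroup.lift R φ hR g).toAdd ≤ T} := by
    have height_eq : (φ (FreeGroup.mk s * FreeGroup.mk u)).toAdd = wordHeight φ s + T := by
      rw [map_mul, toAdd_mul, ← hu.wordHeight_eq, wordHeight, wordHeight]
    rw [mul_one, ← map_mul, Set.mem_ofPred_eq, QuotientGroup.mk'_apply, QuotientGroup.lift_mk,
      height_eq, add_le_iff_nonpos_left]
    exact (hl s hs hs0).not_ge
  rw [← FreeGroup.mul_mk, map_mul, Equiv.Perm.mul_apply,
    restrictedFlow_mk_of_suffixes_mem _ _ inside, restrictedFlow_mk_of_suffixes_notMem _ _ outside,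
    zero_add, mul_one]
  rfl

theorem mk_climb_eq_of_mk_append_eq (hR : R ≤ φ.ker) {l l' u u' : List (α × Bool)}
    (hl : IsPositiveWord φ l) (hl' : IsPositiveWord φ l') (hu : IsClimb φ T u)
    (hu' : IsClimb φ T u')
    (h : (FreeGroup.mk (l ++ u) : FreeGroup α ⧸ ⁅R, R⁆) = FreeGroup.mk (l' ++ u')) :
    (FreeGroup.mk u : FreeGroup α ⧸ R) = FreeGroup.mk u' := by
  set flow := restrictedFlow (QuotientGroup.mk' R) {g | (QuotientGroup.lift R φ hR g).toAdd ≤ T}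
    FreeAbelianGroup.of
  have commutator_le : ⁅R, R⁆ ≤ flow.ker := by
    simpa only [QuotientGroup.ker_mk'] using
      commutator_ker_le_ker_restrictedFlow (QuotientGroup.mk' R)
        {g | (QuotientGroup.lift R φ hR g).toAdd ≤ T} FreeAbelianGroup.of
  have flow_eq : flow (FreeGroup.mk (l ++ u)) = flow (FreeGroup.mk (l' ++ u')) :=
    (MonoidHom.eq_iff _).2 (commutator_le (QuotientGroup.eq.1 h.symm))
  refine FreeAbelianGroup.of_injective (sub_left_injective (b := FreeAbelianGroup.of 1) ?_)
  simp only
  rw [← restrictedFlow_append_climb hR hl hu, ← restrictedFlow_append_climb hR hl' hu', flow_eq]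

theorem injOn_concatPow_of_injOn [DecidableEq α] (hR : R ≤ φ.ker) {S : Finset (List (α × Bool))}
    (hS : ∀ u ∈ S, IsClimb φ T u)
    (hS_inj : Set.InjOn (fun u => (FreeGroup.mk u : FreeGroup α ⧸ R))
      (S : Set (List (α × Bool)))) (k : ℕ) :
    Set.InjOn (fun l => (FreeGroup.mk l : FreeGroup α ⧸ ⁅R, R⁆))
      (concatPow S k : Set (List (α × Bool))) := by
  induction k with
  | zero => simp [concatPow]
  | succ k ih =>
    intro l₁ hl₁ l₂ hl₂ h
    obtain ⟨l, hl, u, hu, rfl⟩ := Finset.mem_image₂.1 hl₁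
    obtain ⟨l', hl', u', hu', rfl⟩ := Finset.mem_image₂.1 hl₂
    obtain rfl : u = u' := hS_inj hu hu' <|
      mk_climb_eq_of_mk_append_eq hR (isPositiveWord_of_mem_concatPow hS hl)
        (isPositiveWord_of_mem_concatPow hS hl') (hS u hu) (hS u' hu') h
    simp only [← FreeGroup.mul_mk, QuotientGroup.mk_mul, mul_left_inj] at h
    rw [ih hl hl' h]

end Decoding

/-! ### Growth rates -/

section Growth

variable {m : ℕ} {G : Type*} [Group G] (σ : Fin m → G)

theorem wordEval_eq_lift (w : List (Fin m × Bool)) :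
    wordEval σ w = FreeGroup.lift σ (FreeGroup.mk w) := by
  simp only [wordEval, FreeGroup.lift_mk, cond_eq_ite]

theorem wordEval_mk (N : Subgroup (FreeGroup (Fin m))) [N.Normal] (w : List (Fin m × Bool)) :
    wordEval (fun i => (FreeGroup.of i : FreeGroup (Fin m) ⧸ N)) w = FreeGroup.mk w := by
  have lift_eq : FreeGroup.lift (fun i => (FreeGroup.of i : FreeGroup (Fin m) ⧸ N)) =
      QuotientGroup.mk' N := by
    ext i
    simp
  rw [wordEval_eq_lift, lift_eq, QuotientGroup.mk'_apply]

theorem ball_finite (n : ℕ) : (ball σ n).Finite :=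
  (List.finite_length_le (Fin m × Bool) n).image (wordEval σ)

theorem card_pow_le_ncard_ball {S : Finset (List (Fin m × Bool))} {N k : ℕ}
    (hS : ∀ u ∈ S, u.length = N)
    (h_inj : Set.InjOn (wordEval σ) (concatPow S k : Set (List (Fin m × Bool)))) :
    S.card ^ k ≤ (ball σ (k * N)).ncard := by
  rw [← card_concatPow hS, ← Set.ncard_coe_finset, ← h_inj.ncard_image]
  refine Set.ncard_le_ncard ?_ (ball_finite σ _)
  rintro _ ⟨l, hl, rfl⟩
  exact ⟨l, (length_of_mem_concatPow hS hl).le, rfl⟩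

theorem ncard_ball_le [NeZero m] (n : ℕ) :
    (ball σ n).ncard ≤ (n + 1) * (2 * m) * (2 * m - 1) ^ n := by
  classical
  let words := (Finset.range (n + 1) ×ˢ Finset.univ).biUnion
    fun p : ℕ × (Fin m × Bool) => reducedTails p.1 p.2
  have ball_subset : ball σ n ⊆ (words.image (wordEval σ) : Finset G) := by
    rintro _ ⟨w, hw, rfl⟩
    have reduce_length : (FreeGroup.reduce w).length < n + 1 :=
      Nat.lt_succ_of_le (FreeGroup.reduce.red.length_le.trans hw)
    obtain ⟨x, hx⟩ := exists_mem_reducedTails (.of_reduce_eq (FreeGroup.reduce.idem (L := w)))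
    refine Finset.mem_image.2 ⟨FreeGroup.reduce w, Finset.mem_biUnion.2 ⟨(_, x), ?_, hx⟩, ?_⟩
    · exact Finset.mem_product.2 ⟨Finset.mem_range.2 reduce_length, Finset.mem_univ x⟩
    · rw [wordEval_eq_lift, wordEval_eq_lift, FreeGroup.reduce.self]
  have card_words : words.card ≤ (n + 1) * (2 * m) * (2 * m - 1) ^ n := by
    refine (Finset.card_biUnion_le_card_mul _ _ ((2 * m - 1) ^ n) fun p hp => ?_).trans_eq ?_
    · rw [card_reducedTails, Fintype.card_fin]
      have hpn := Finset.mem_range.1 (Finset.mem_product.1 hp).1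
      exact Nat.pow_le_pow_right (by have := NeZero.pos m; lia) (Nat.le_of_lt_succ hpn)
    · simp [mul_comm m 2]
  calc (ball σ n).ncard ≤ (words.image (wordEval σ)).card := by
        rw [← Set.ncard_coe_finset]
        exact Set.ncard_le_ncard ball_subset (Finset.finite_toSet _)
    _ ≤ words.card := Finset.card_image_le
    _ ≤ (n + 1) * (2 * m) * (2 * m - 1) ^ n := card_words

theorem tendsto_const_mul_natCast_rpow_one_div {c : ℝ} (hc : 0 < c) :
    Tendsto (fun n : ℕ => (c * n) ^ (1 / (n : ℝ))) atTop (𝓝 1) := by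
  have h_const : Tendsto (fun n : ℕ => c ^ (1 / (n : ℝ))) atTop (𝓝 1) := by
    simpa using tendsto_const_nhds.rpow tendsto_one_div_atTop_nhds_zero_nat (.inl hc.ne')
  have h_self : Tendsto (fun n : ℕ => (n : ℝ) ^ (1 / (n : ℝ))) atTop (𝓝 1) :=
    tendsto_rpow_div.comp tendsto_natCast_atTop_atTop
  simpa only [mul_one, Real.mul_rpow hc.le (Nat.cast_nonneg _)] using h_const.mul h_self

theorem ncard_ball_rpow_le [NeZero m] {n : ℕ} (hn : n ≠ 0) :
    ((ball σ n).ncard : ℝ) ^ (1 / (n : ℝ)) ≤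
      (4 * m * n) ^ (1 / (n : ℝ)) * (2 * (m : ℝ) - 1) := by
  have m_pos := NeZero.pos m
  have one_le_n : (1 : ℝ) ≤ n := by exact_mod_cast Nat.one_le_iff_ne_zero.2 hn
  have cast_eq : ((2 * m - 1 : ℕ) : ℝ) = 2 * m - 1 := by
    rw [Nat.cast_sub (by lia)]
    push_cast
    rfl
  have q_nonneg : (0 : ℝ) ≤ 2 * m - 1 := cast_eq ▸ Nat.cast_nonneg _
  have ncard_le : ((ball σ n).ncard : ℝ) ≤ 4 * m * n * (2 * m - 1) ^ n := by
    calc ((ball σ n).ncard : ℝ) ≤ (n + 1) * (2 * m) * (2 * m - 1) ^ n := by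
          rw [← cast_eq]
          exact_mod_cast ncard_ball_le σ n
      _ ≤ (n + n) * (2 * m) * (2 * m - 1) ^ n := by gcongr
      _ = 4 * m * n * (2 * m - 1) ^ n := by ring
  calc ((ball σ n).ncard : ℝ) ^ (1 / (n : ℝ))
      ≤ (4 * m * n * (2 * m - 1) ^ n) ^ (1 / (n : ℝ)) := by gcongr
    _ = (4 * m * n) ^ (1 / (n : ℝ)) * (2 * (m : ℝ) - 1) := by
      rw [Real.mul_rpow (by positivity) (by positivity), one_div,
        Real.pow_rpow_inv_natCast q_nonneg hn]

theorem tendsto_ncard_ball_bound [NeZero m] :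
    Tendsto (fun n : ℕ => (4 * m * n : ℝ) ^ (1 / (n : ℝ)) * (2 * (m : ℝ) - 1)) atTop
      (𝓝 (2 * (m : ℝ) - 1)) := by
  have m_pos : (0 : ℝ) < m := by exact_mod_cast NeZero.pos m
  simpa only [one_mul] using
    (tendsto_const_mul_natCast_rpow_one_div (by positivity)).mul_const (2 * (m : ℝ) - 1)

theorem growthRate_le [NeZero m] : growthRate σ ≤ 2 * (m : ℝ) - 1 := by
  rw [← tendsto_ncard_ball_bound.limsup_eq]
  refine limsup_le_limsup ((eventually_ne_atTop 0).mono fun n => ncard_ball_rpow_le σ) ?_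
    tendsto_ncard_ball_bound.isBoundedUnder_le
  exact IsBoundedUnder.isCoboundedUnder_le
    (isBoundedUnder_of ⟨0, fun n => Real.rpow_nonneg (Nat.cast_nonneg _) _⟩)

variable {σ}

theorem le_growthRate [NeZero m] {r : ℝ} (hr : 0 ≤ r) {N : ℕ} (hN : N ≠ 0)
    (h : ∀ k : ℕ, r ^ (k * N) ≤ (ball σ (k * N)).ncard) : r ≤ growthRate σ := by
  have le_rpow {k : ℕ} (hk : k ≠ 0) :
      r ≤ ((ball σ (k * N)).ncard : ℝ) ^ (1 / ((k * N : ℕ) : ℝ)) :=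
    calc r = (r ^ (k * N)) ^ (1 / ((k * N : ℕ) : ℝ)) := by
          rw [one_div, Real.pow_rpow_inv_natCast hr (mul_ne_zero hk hN)]
      _ ≤ ((ball σ (k * N)).ncard : ℝ) ^ (1 / ((k * N : ℕ) : ℝ)) := by gcongr; exact h k
  refine le_limsup_of_frequently_le ?_ (tendsto_ncard_ball_bound.isBoundedUnder_le.mono_le
    ((eventually_ne_atTop 0).mono fun n => ncard_ball_rpow_le σ))
  refine (tendsto_id.atTop_mul_const' (Nat.pos_of_ne_zero hN)).frequently ?_
  exact ((eventually_ne_atTop 0).mono fun k => le_rpow).frequently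

theorem one_le_growthRate [NeZero m] : 1 ≤ growthRate σ := by
  refine le_growthRate zero_le_one one_ne_zero fun k => ?_
  rw [one_pow, Nat.one_le_cast, Nat.succ_le_iff, Set.ncard_pos (ball_finite σ _)]
  exact ⟨1, [], Nat.zero_le _, rfl⟩

end Growth

section Convergence

variable {m : ℕ} {φ : FreeGroup (Fin m) →* Multiplicative ℤ}

theorem le_growthRate_of_climbs [NeZero m] {R : Subgroup (FreeGroup (Fin m))} [R.Normal]
    (hR : R ≤ φ.ker) {r : ℝ} (hr : 0 ≤ r) {N : ℕ} (hN : N ≠ 0) {T : ℤ}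
    {S : Finset (List (Fin m × Bool))} (hS_card : r ^ N ≤ S.card)
    (hS : ∀ u ∈ S, u.length = N ∧ IsClimb φ T u)
    (hS_inj : Set.InjOn (fun u => (FreeGroup.mk u : FreeGroup (Fin m) ⧸ R))
      (S : Set (List (Fin m × Bool)))) :
    r ≤ growthRate fun i : Fin m => (FreeGroup.of i : FreeGroup (Fin m) ⧸ ⁅R, R⁆) := by
  refine le_growthRate hr hN fun k => ?_
  have h_inj := injOn_concatPow_of_injOn hR (fun u hu => (hS u hu).2) hS_inj k
  simp only [← wordEval_mk] at h_inj
  calc r ^ (k * N) = (r ^ N) ^ k := by rw [← pow_mul, mul_comm]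
    _ ≤ (S.card : ℝ) ^ k := by gcongr
    _ ≤ _ := by exact_mod_cast card_pow_le_ncard_ball _ (fun u hu => (hS u hu).1) h_inj

theorem exists_finset_forall_le_growthRate [NeZero m] (hφ : φ ≠ 1) {r : ℝ} (hr : r < 2 * m - 1) :
    ∃ E : Finset (FreeGroup (Fin m)), 1 ∉ E ∧
      ∀ (R : Subgroup (FreeGroup (Fin m))) [R.Normal], R ≤ φ.ker → (∀ g ∈ E, g ∉ R) →
        r ≤ growthRate fun i : Fin m => (FreeGroup.of i : FreeGroup (Fin m) ⧸ ⁅R, R⁆) := by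
  rcases le_total r 1 with hr1 | hr1
  · exact ⟨∅, Finset.notMem_empty 1, fun R _ _ _ => hr1.trans one_le_growthRate⟩
  have one_lt_m : 1 < m := by
    have : (1 : ℝ) < m := by linarith
    exact_mod_cast this
  have r_lt : r < (2 * Fintype.card (Fin m) - 1 : ℕ) := by
    rw [Fintype.card_fin, Nat.cast_sub (by lia)]
    exact_mod_cast hr
  obtain ⟨N, T, S, hN, hS_card, hS, hS_inj⟩ :=
    exists_climbs (by rwa [Fintype.card_fin]) hφ (zero_lt_one.trans_le hr1) r_lt
  refine ⟨(Finset.image₂ (fun u u' => (FreeGroup.mk u)⁻¹ * FreeGroup.mk u') S S).erase 1,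
    Finset.notMem_erase 1 _, fun R _ hR hE => ?_⟩
  refine le_growthRate_of_climbs hR (zero_le_one.trans hr1) hN.ne' hS_card hS
    fun u hu u' hu' h => hS_inj hu hu' (inv_mul_eq_one.1 ?_)
  by_contra h_ne
  exact hE _ (Finset.mem_erase.2 ⟨h_ne, Finset.mem_image₂_of_mem hu hu'⟩) (QuotientGroup.eq.1 h)

theorem eventually_notMem_of_iInf_eq_bot {ι G : Type*} [Preorder ι] [Group G]
    {R : ι → Subgroup G} (hR : Antitone R) (h_bot : ⨅ n, R n = ⊥) {g : G} (hg : g ≠ 1) :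
    ∀ᶠ n in atTop, g ∉ R n := by
  obtain ⟨n, hn⟩ : ∃ n, g ∉ R n := by
    by_contra! h
    exact hg (Subgroup.mem_bot.1 (h_bot ▸ Subgroup.mem_iInf.2 h))
  exact (eventually_ge_atTop n).mono fun k hk h => hn (hR hk h)

theorem growth_rates_tendsto_of_chain_general {ι : Type*} {l : Filter ι} (hφ : φ ≠ 1)
    (R : ι → Subgroup (FreeGroup (Fin m))) [∀ i, (R i).Normal] (hker : ∀ᶠ i in l, R i ≤ φ.ker)
    (hR : ∀ g ≠ 1, ∀ᶠ i in l, g ∉ R i) :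
    Tendsto (fun i => growthRate fun j =>
      (QuotientGroup.mk (FreeGroup.of j) : FreeGroup (Fin m) ⧸ ⁅R i, R i⁆)) l
      (𝓝 (2 * (m : ℝ) - 1)) := by
  have : NeZero m := ⟨by
    rintro rfl
    exact (exists_wordHeight_singleton_pos hφ).elim fun x _ => x.1.elim0⟩
  refine tendsto_order.2
    ⟨fun a ha => ?_, fun a ha => .of_forall fun i => (growthRate_le _).trans_lt ha⟩
  obtain ⟨r, har, hr⟩ := exists_between ha
  obtain ⟨E, hE1, hE⟩ := exists_finset_forall_le_growthRate hφ hr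
  have h_avoid : ∀ᶠ i in l, ∀ g ∈ E, g ∉ R i :=
    (eventually_all_finset E).2 fun g hg => hR g (ne_of_mem_of_not_mem hg hE1)
  filter_upwards [hker, h_avoid] with i hi hi'
  exact har.trans_le (hE (R i) hi hi')

end Convergence

/-- Theorem 2. Let `φ : F_m → ℤ` be a surjective homomorphism and let
`ker φ ≥ R₁ ≥ R₂ ≥ ⋯` be a descending sequence of normal subgroups of `F_m` with trivial
intersection. Then `ω(F_m/Rₙ', A) → 2m - 1` as `n → ∞`, where the growth rate is taken
with respect to the images of the free basis `A`. -/
theorem growth_rates_tendsto_of_chain (m : ℕ) (hm : 2 ≤ m)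
    (φ : FreeGroup (Fin m) → ℤ)
    (hφ : ∀ x y : FreeGroup (Fin m), φ (x * y) = φ x + φ y)
    (hsurj : Function.Surjective φ)
    (R : ℕ → Subgroup (FreeGroup (Fin m))) [∀ n, (R n).Normal]
    (hker : ∀ n, ∀ g ∈ R n, φ g = 0)
    (hdesc : ∀ n, R (n + 1) ≤ R n)
    (htriv : (⨅ n, R n) = ⊥) :
    Filter.Tendsto
      (fun n : ℕ => growthRate (fun i =>
        (QuotientGroup.mk (FreeGroup.of i) : FreeGroup (Fin m) ⧸ ⁅R n, R n⁆)))
      Filter.atTop (nhds (2 * (m : ℝ) - 1)) := by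
  have hφ' : MonoidHom.mk' (fun g => Multiplicative.ofAdd (φ g)) hφ ≠ 1 := fun h => by
    obtain ⟨g, hg⟩ := hsurj 1
    exact one_ne_zero (hg.symm.trans (DFunLike.congr_fun h g))
  exact growth_rates_tendsto_of_chain_general hφ' R (.of_forall hker) fun g hg =>
    eventually_notMem_of_iInf_eq_bot (antitone_nat_of_succ_le hdesc) htriv hg
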